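/- For every integer d ≥ 1, every natural number k, and all reals a, b with |a − b| ≤ 1, it holds that |((a + b)/2 + ((a − b)/2)·g_d^{(k)}(a − b)) − max(a, b)| ≤ (|a − b|/2)·(1 − |a − b|)^{(p_d)^k}, where the exponentiation is the real power with exponent (p_d)^k. -/

import Mathlib

noncomputable def g (d : ℕ) : ℝ → ℝ :=
  fun m => ∑ i ∈ Finset.range (d + 1),
    (1 / 4 ^ i : ℝ) * (Nat.choose (2 * i) i) * (m * (1 - m ^ 2) ^ i)

noncomputable def p (d : ℕ) : ℝ :=
  ∑ i ∈ Finset.range (d + 1), (1 / 4 ^ i : ℝ) * (Nat.choose (2 * i) i)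

theorem q_succ (n : ℕ) : 2 * ((n : ℝ) + 1) * ((1 / 4 ^ (n+1) : ℝ) * (Nat.choose (2 * (n+1)) (n+1)))
    = (2 * n + 1) * ((1 / 4 ^ n : ℝ) * (Nat.choose (2 * n) n)) := by
  have h := Nat.succ_mul_centralBinom_succ n
  simp only [Nat.centralBinom] at h
  have h' : ((n : ℝ) + 1) * (Nat.choose (2 * (n+1)) (n+1)) = 2 * (2 * n + 1) * (Nat.choose (2 * n) n) := by
    exact_mod_cast h
  have e : (1 / 4 ^ (n+1) : ℝ) = (1 / 4 ^ n) / 4 := by rw [pow_succ]; field_simp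
  rw [e]
  linear_combination (1 / 4 ^ n : ℝ) / 2 * h'

theorem p_eq (d : ℕ) : p d = (2 * d + 1) * ((1 / 4 ^ d : ℝ) * (Nat.choose (2 * d) d)) := by
  induction d with
  | zero => simp [p]
  | succ n ih =>
    have h := q_succ n
    unfold p at *
    rw [Finset.sum_range_succ, ih, ← h]
    push_cast
    ring

theorem p_succ (n : ℕ) : p (n+1) = p n + (1 / 4 ^ (n+1) : ℝ) * (Nat.choose (2 * (n+1)) (n+1)) := by
  unfold p
  rw [Finset.sum_range_succ]

theorem p_one_le (d : ℕ) : 1 ≤ p d := by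
  induction d with
  | zero => simp [p]
  | succ n ih =>
    rw [p_succ]
    have : (0:ℝ) ≤ (1 / 4 ^ (n+1) : ℝ) * (Nat.choose (2 * (n+1)) (n+1)) := by positivity
    linarith

theorem p_le (d : ℕ) : p d ≤ d + 1 := by
  unfold p
  have : ∑ i ∈ Finset.range (d + 1), (1 / 4 ^ i : ℝ) * (Nat.choose (2 * i) i)
      ≤ ∑ i ∈ Finset.range (d + 1), (1 : ℝ) := by
    apply Finset.sum_le_sum
    intro i _
    have h : Nat.choose (2 * i) i ≤ 4 ^ i := by
      have := Nat.choose_le_two_pow (2 * i) i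
      rwa [pow_mul] at this
    have h' : (Nat.choose (2 * i) i : ℝ) ≤ 4 ^ i := by exact_mod_cast h
    rw [one_div, inv_mul_le_iff₀ (by positivity)]
    linarith
  simpa using this

theorem g_succ (n : ℕ) (m : ℝ) : g (n+1) m = g n m +
    (1 / 4 ^ (n+1) : ℝ) * (Nat.choose (2 * (n+1)) (n+1)) * (m * (1 - m ^ 2) ^ (n+1)) := by
  unfold g
  rw [Finset.sum_range_succ]

theorem g_deriv (d : ℕ) (m : ℝ) : HasDerivAt (g d) (p d * (1 - m ^ 2) ^ d) m := by
  induction d with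
  | zero =>
    have : g 0 = fun m => m := by funext m; simp [g]
    rw [this]
    simpa [p] using hasDerivAt_id' m
  | succ n ih =>
    have e : g (n+1) = fun m => g n m +
      (1 / 4 ^ (n+1) : ℝ) * (Nat.choose (2 * (n+1)) (n+1)) * (m * (1 - m ^ 2) ^ (n+1)) :=
      funext (g_succ n)
    rw [e]
    have h1 : HasDerivAt (fun m : ℝ => 1 - m ^ 2) (-(2 * m)) m := by
      simpa using (hasDerivAt_pow 2 m).const_sub 1
    have h2 := ((hasDerivAt_id m).mul (h1.pow (n+1))).const_mul
      ((1 / 4 ^ (n+1) : ℝ) * (Nat.choose (2 * (n+1)) (n+1)))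
    have h3 := ih.add h2
    refine h3.congr_deriv ?_
    have hq := q_succ n
    have hp := p_eq n
    rw [p_succ, hp, ← hq]
    simp only [id, Nat.add_sub_cancel, Pi.pow_apply]
    push_cast
    ring

theorem g_one (d : ℕ) : g d 1 = 1 := by
  induction d with
  | zero => simp [g]
  | succ n ih => rw [g_succ, ih]; simp

theorem g_zero (d : ℕ) : g d 0 = 0 := by simp [g]

theorem g_neg (d : ℕ) (m : ℝ) : g d (-m) = - g d m := by
  simp [g, ← Finset.sum_neg_distrib]

theorem g_mono (d : ℕ) : MonotoneOn (g d) (Set.Icc 0 1) := by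
  apply monotoneOn_of_deriv_nonneg (convex_Icc 0 1)
  · exact fun x _ => (g_deriv d x).continuousAt.continuousWithinAt
  · exact fun x _ => (g_deriv d x).differentiableAt.differentiableWithinAt
  · intro x hx
    rw [interior_Icc] at hx
    rw [(g_deriv d x).deriv]
    have := p_one_le d
    have h : 0 ≤ 1 - x ^ 2 := by nlinarith [hx.1, hx.2]
    positivity

theorem g_mem (d : ℕ) {x : ℝ} (hx : x ∈ Set.Icc (0:ℝ) 1) : g d x ∈ Set.Icc (0:ℝ) 1 := by
  constructor
  · rw [← g_zero d]
    exact g_mono d (by simp) hx hx.1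
  · rw [← g_one d]
    exact g_mono d hx (by simp) hx.2

theorem log_aux {t u : ℝ} (ht : 0 ≤ t) (ht1 : t ≤ 1) (hu : 0 < u) :
    t * Real.log u ≤ Real.log (1 - t + t * u) := by
  have h := strictConcaveOn_log_Ioi.concaveOn.2 (show (1:ℝ) ∈ Set.Ioi 0 by simp)
    (show u ∈ Set.Ioi 0 from hu) (show 0 ≤ 1 - t by linarith) ht (by ring)
  simpa using h

/-- The auxiliary logarithmic comparison function. -/
noncomputable def LL (d : ℕ) (x : ℝ) : ℝ :=
  (d + 1 - p d) * Real.log (1 - x) + d * Real.log (1 + x)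

theorem LL_scale (d : ℕ) {t x : ℝ} (ht : 0 ≤ t) (ht1 : t ≤ 1) (hx : 0 ≤ x) (hx1 : x < 1) :
    t * LL d x ≤ LL d (t * x) := by
  have h1 := log_aux ht ht1 (u := 1 - x) (by linarith)
  have h2 := log_aux ht ht1 (u := 1 + x) (by linarith)
  rw [show 1 - t + t * (1 - x) = 1 - t * x by ring] at h1
  rw [show 1 - t + t * (1 + x) = 1 + t * x by ring] at h2
  have h3 : 0 ≤ d + 1 - p d := by linarith [p_le d]
  unfold LL
  have h4 := mul_le_mul_of_nonneg_left h1 h3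
  have h5 := mul_le_mul_of_nonneg_left h2 (Nat.cast_nonneg (α := ℝ) d)
  linarith

theorem LL_rel (d : ℕ) {x : ℝ} (hx : 0 ≤ x) (hx1 : x < 1) :
    (1 - x ^ 2) ^ d = (1 - x) ^ (p d - 1) * Real.exp (LL d x) := by
  have a : 0 < 1 - x := by linarith
  have b : 0 < 1 + x := by linarith
  rw [Real.rpow_def_of_pos a, ← Real.exp_add, show 1 - x ^ 2 = (1 - x) * (1 + x) by ring,
    ← Real.rpow_natCast, Real.rpow_def_of_pos (by positivity), Real.log_mul a.ne' b.ne']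
  congr 1
  unfold LL
  ring

theorem h_deriv (d : ℕ) {x : ℝ} (hx : 0 ≤ x) (hx1 : x < 1) :
    HasDerivAt (fun x => (1 - x) ^ (p d) + g d x)
      (p d * (1 - x) ^ (p d - 1) * (Real.exp (LL d x) - 1)) x := by
  have h1 : HasDerivAt (fun x : ℝ => 1 - x) (-1) x := by
    simpa using (hasDerivAt_id x).const_sub 1
  have h2 := (h1.rpow_const (p := p d) (Or.inl (by linarith))).add (g_deriv d x)
  refine h2.congr_deriv ?_
  rw [LL_rel d hx hx1]
  ring

theorem h_cont (d : ℕ) : Continuous (fun x => (1 - x) ^ (p d) + g d x) := by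
  have h : Continuous (g d) :=
    continuous_iff_continuousAt.2 fun x => (g_deriv d x).continuousAt
  have := p_one_le d
  exact ((continuous_const.sub continuous_id).rpow_const
    (fun _ => Or.inr (by linarith))).add h

theorem key (d : ℕ) {x : ℝ} (hx : x ∈ Set.Icc (0:ℝ) 1) : 1 - g d x ≤ (1 - x) ^ (p d) := by
  have hp := p_one_le d
  rcases hx.1.eq_or_lt with h0 | h0
  · rw [← h0, g_zero]; simp
  rcases hx.2.eq_or_lt with h1 | h1
  · rw [h1, g_one]; simp; positivity
  rcases le_or_gt 0 (LL d x) with hL | hL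
  · have hm : MonotoneOn (fun x => (1 - x) ^ (p d) + g d x) (Set.Icc 0 x) := by
      apply monotoneOn_of_deriv_nonneg (convex_Icc 0 x) (h_cont d).continuousOn
      · rw [interior_Icc]
        exact fun y hy => (h_deriv d hy.1.le (hy.2.trans h1)).differentiableAt.differentiableWithinAt
      · rw [interior_Icc]
        intro y hy
        rw [(h_deriv d hy.1.le (hy.2.trans h1)).deriv]
        have hs := LL_scale d (t := y / x) (div_nonneg hy.1.le h0.le)
          ((div_le_one h0).2 hy.2.le) h0.le h1
        rw [div_mul_cancel₀ _ h0.ne'] at hs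
        have h2 : 0 ≤ LL d y := le_trans (mul_nonneg (div_nonneg hy.1.le h0.le) hL) hs
        have h3 := Real.one_le_exp h2
        have h4 : 0 ≤ (1 - y) ^ (p d - 1) := Real.rpow_nonneg (by linarith [hy.2]) _
        exact mul_nonneg (mul_nonneg (by linarith) h4) (by linarith)
    have := hm ⟨le_rfl, h0.le⟩ ⟨h0.le, le_rfl⟩ h0.le
    simp [g_zero] at this
    linarith
  · have hm : AntitoneOn (fun x => (1 - x) ^ (p d) + g d x) (Set.Icc x 1) := by
      apply antitoneOn_of_deriv_nonpos (convex_Icc x 1) (h_cont d).continuousOn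
      · rw [interior_Icc]
        exact fun y hy => (h_deriv d (h0.trans hy.1).le hy.2).differentiableAt.differentiableWithinAt
      · rw [interior_Icc]
        intro y hy
        have hy0 := h0.trans hy.1
        rw [(h_deriv d hy0.le hy.2).deriv]
        have hs := LL_scale d (t := x / y) (div_nonneg h0.le hy0.le)
          ((div_le_one hy0).2 hy.1.le) hy0.le hy.2
        rw [div_mul_cancel₀ _ hy0.ne'] at hs
        have h2 : LL d y ≤ 0 := by
          by_contra! hc
          have := mul_pos (div_pos h0 hy0) hc
          linarith
        have h3 := Real.exp_le_one_iff.2 h2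
        have h4 : 0 ≤ (1 - y) ^ (p d - 1) := Real.rpow_nonneg (by linarith [hy.2]) _
        exact mul_nonpos_of_nonneg_of_nonpos (mul_nonneg (by linarith) h4) (by linarith)
    have := hm ⟨le_rfl, h1.le⟩ ⟨h1.le, le_rfl⟩ h1.le
    simp [g_one, Real.zero_rpow (show p d ≠ 0 by linarith)] at this
    linarith

theorem iter_key (d k : ℕ) {x : ℝ} (hx : x ∈ Set.Icc (0:ℝ) 1) :
    (g d)^[k] x ∈ Set.Icc (0:ℝ) 1 ∧ 1 - (g d)^[k] x ≤ (1 - x) ^ (p d ^ k) := by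
  induction k with
  | zero => simpa using hx
  | succ n ih =>
    rw [Function.iterate_succ_apply']
    refine ⟨g_mem d ih.1, (key d ih.1).trans ?_⟩
    rw [pow_succ, Real.rpow_mul (by linarith [hx.2])]
    exact Real.rpow_le_rpow (by linarith [ih.1.2]) ih.2 (by linarith [p_one_le d])

theorem iter_neg (d k : ℕ) (x : ℝ) : (g d)^[k] (-x) = - (g d)^[k] x := by
  induction k with
  | zero => simp
  | succ n ih => rw [Function.iterate_succ_apply', ih, g_neg, Function.iterate_succ_apply']

theorem stmt_12 (d : ℕ) (hd : 1 ≤ d) (k : ℕ) (a b : ℝ) (hab : |a - b| ≤ 1) :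
    |((a + b) / 2 + ((a - b) / 2) * (g d)^[k] (a - b)) - max a b| ≤
      (|a - b| / 2) * (1 - |a - b|) ^ (p d ^ k) := by
  obtain ⟨h1, h2⟩ := iter_key d k (x := |a - b|) ⟨abs_nonneg _, hab⟩
  have e : (a + b) / 2 + ((a - b) / 2) * (g d)^[k] (a - b) - max a b
      = -(|a - b| / 2 * (1 - (g d)^[k] |a - b|)) := by
    rcases le_total b a with h | h
    · rw [abs_of_nonneg (by linarith), max_eq_left h]; ring
    · rw [abs_of_nonpos (by linarith), max_eq_right h, iter_neg]; ring
  have h3 : 0 ≤ |a - b| / 2 := by positivity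
  rw [e, abs_neg, abs_of_nonneg (mul_nonneg h3 (by linarith [h1.2]))]
  exact mul_le_mul_of_nonneg_left h2 h3
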